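/- Consider the Rennala MVR iteration of the previous setting and fix ε > 0 with ε < σ² and ε < 2L̄Δ, where Δ = f(x⁰) − f*. Choose γ = 1/(4L̄), p = √ε/σ, B₀ = ⌈6σ²/ε⌉, and B = ⌈6σ/√ε⌉. Then for every K ≥ 24ΔL̄/ε + σ/√ε, the iterates satisfy (1/K)∑_{k=0}^{K−1} E[‖∇f(x^k)‖²] ≤ ε. -/

import Mathlib

open MeasureTheory

/-- One step of the Rennala MVR recursion: given the initialization samples `ζ` and the
per-iteration samples `ξ`, `rennalaMVR G γ p B₀ B x0 ζ ξ k = (xᵏ, gᵏ)` where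
`g⁰ = (1/B₀)∑ⱼ G x⁰ ζⱼ`, `x^{k+1} = x^k − γ g^k` and
`g^{k+1} = (1/B)∑ⱼ G x^{k+1} ξ^{k,j} + (1−p)(g^k − (1/B)∑ⱼ G x^k ξ^{k,j})`. -/
noncomputable def rennalaMVR {d : ℕ} {Ω : Type*}
    (G : EuclideanSpace ℝ (Fin d) → Ω → EuclideanSpace ℝ (Fin d))
    (γ p : ℝ) (B₀ B : ℕ) (x0 : EuclideanSpace ℝ (Fin d))
    (ζ : Fin B₀ → Ω) (ξ : ℕ → Fin B → Ω) :
    ℕ → EuclideanSpace ℝ (Fin d) × EuclideanSpace ℝ (Fin d)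
  | 0 => (x0, (B₀ : ℝ)⁻¹ • ∑ j, G x0 (ζ j))
  | k + 1 =>
    let prev := rennalaMVR G γ p B₀ B x0 ζ ξ k
    let x1 := prev.1 - γ • prev.2
    (x1,
      (B : ℝ)⁻¹ • ∑ j, G x1 (ξ k j)
        + (1 - p) • (prev.2 - (B : ℝ)⁻¹ • ∑ j, G prev.1 (ξ k j)))

/-!
The state `(xᵏ, gᵏ)` is a Markov chain driven by independent minibatches. At each step the error
`gᵏ - ∇f(xᵏ)` is scaled by `1 - p` and receives an independent centred noise, whose second moment is
at most `(2p²σ² + 2(1-p)²L²‖xᵏ⁺¹ - xᵏ‖²)/B`; the displacement `‖xᵏ⁺¹ - xᵏ‖² = γ²‖gᵏ‖²` is paid for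
by the `-‖gᵏ‖²` term of the descent inequality for `f` as soon as `pB ≥ 1`. Hence the potential
`f(x) - f* + γ/(2p) ‖g - ∇f(x)‖²` decreases in expectation by `γ/2 ‖∇f(xᵏ)‖²`, up to the additive
error `γpσ²/B`, and these decreases telescope.
-/

open ProbabilityTheory Function Finset
open scoped ENNReal NNReal

section Independence

variable {Θ 𝓧 𝓨 : Type*} [MeasurableSpace Θ] [MeasurableSpace 𝓧] [MeasurableSpace 𝓨]
  {P : Measure Θ}

lemma lintegral_eq_lintegral_lintegral_of_indepFun [IsFiniteMeasure P] {ν : Measure 𝓨}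
    {X : Θ → 𝓧} {Y : Θ → 𝓨} (hX : Measurable X) (hY : MeasurePreserving Y P ν)
    (hXY : IndepFun X Y P) {F : 𝓧 → 𝓨 → ℝ≥0∞} (hF : Measurable (uncurry F)) :
    ∫⁻ θ, F (X θ) (Y θ) ∂P = ∫⁻ θ, ∫⁻ y, F (X θ) y ∂ν ∂P := by
  have hlaw := (indepFun_iff_map_prod_eq_prod_map_map hX.aemeasurable hY.aemeasurable).1 hXY
  rw [hY.map_eq] at hlaw
  have : IsFiniteMeasure ν := hY.map_eq ▸ inferInstance
  calc ∫⁻ θ, F (X θ) (Y θ) ∂P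
      = ∫⁻ z, uncurry F z ∂(P.map fun θ => (X θ, Y θ)) :=
        (lintegral_map hF (hX.prodMk hY.measurable)).symm
    _ = ∫⁻ x, ∫⁻ y, F x y ∂ν ∂(P.map X) := by
        rw [hlaw, lintegral_prod _ hF.aemeasurable]; rfl
    _ = ∫⁻ θ, ∫⁻ y, F (X θ) y ∂ν ∂P := lintegral_map hF.lintegral_prod_right hX

theorem lintegral_add_sum_lintegral_le_of_drift [IsProbabilityMeasure P] {ν : Measure 𝓨}
    {step : 𝓧 → 𝓨 → 𝓧} (hstep : Measurable (uncurry step)) {V I : 𝓧 → ℝ≥0∞}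
    (hV : Measurable V) (hI : Measurable I) {c : ℝ≥0∞}
    (hdrift : ∀ x, ∫⁻ y, V (step x y) ∂ν + I x ≤ V x + c) {S : ℕ → Θ → 𝓧} {Y : ℕ → Θ → 𝓨} {n : ℕ}
    (hSm : ∀ k < n, Measurable (S k)) (hS : ∀ k < n, ∀ θ, S (k + 1) θ = step (S k θ) (Y k θ))
    (hY : ∀ k < n, MeasurePreserving (Y k) P ν) (hSY : ∀ k < n, IndepFun (S k) (Y k) P) :
    ∫⁻ θ, V (S n θ) ∂P + ∑ k ∈ range n, ∫⁻ θ, I (S k θ) ∂P ≤ ∫⁻ θ, V (S 0 θ) ∂P + n * c := by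
  induction n with
  | zero => simp
  | succ n ih =>
    have hn := n.lt_succ_self
    have hIm : Measurable fun θ => I (S n θ) := hI.comp (hSm n hn)
    have hdrift_n : ∫⁻ θ, V (S (n + 1) θ) ∂P + ∫⁻ θ, I (S n θ) ∂P ≤ ∫⁻ θ, V (S n θ) ∂P + c := by
      simp_rw [hS n hn]
      rw [lintegral_eq_lintegral_lintegral_of_indepFun (F := fun x y => V (step x y)) (hSm n hn)
        (hY n hn) (hSY n hn) (hV.comp hstep), ← lintegral_add_right _ hIm]
      calc _ ≤ ∫⁻ θ, (V (S n θ) + c) ∂P := lintegral_mono fun θ => hdrift (S n θ)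
        _ = _ := by
          rw [lintegral_add_right _ measurable_const, lintegral_const, measure_univ, mul_one]
    have ih := ih (fun k hk => hSm k (by omega)) (fun k hk => hS k (by omega))
      (fun k hk => hY k (by omega)) (fun k hk => hSY k (by omega))
    calc _ = (∫⁻ θ, V (S (n + 1) θ) ∂P + ∫⁻ θ, I (S n θ) ∂P)
          + ∑ k ∈ range n, ∫⁻ θ, I (S k θ) ∂P := by rw [sum_range_succ]; ring
      _ ≤ (∫⁻ θ, V (S n θ) ∂P + c) + ∑ k ∈ range n, ∫⁻ θ, I (S k θ) ∂P := by gcongr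
      _ = (∫⁻ θ, V (S n θ) ∂P + ∑ k ∈ range n, ∫⁻ θ, I (S k θ) ∂P) + c := by ring
      _ ≤ (∫⁻ θ, V (S 0 θ) ∂P + n * c) + c := by gcongr
      _ = _ := by push_cast; ring

lemma indepFun_eval_comp_pi {ι κ : Type*} [Fintype ι] {ν : Measure 𝓨} [IsProbabilityMeasure ν]
    {g : κ → ι} {i : ι} (hg : ∀ j, g j ≠ i) :
    IndepFun (fun (η : ι → 𝓨) j => η (g j)) (fun η => η i) (Measure.pi fun _ => ν) := by
  classical
  have hcoord : iIndepFun (fun i (η : ι → 𝓨) => η i) (Measure.pi fun _ => ν) :=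
    iIndepFun_pi (X := fun _ => id) fun _ => aemeasurable_id
  have hothers : Measurable fun (u : ({i}ᶜ : Finset ι) → 𝓨) j => u ⟨g j, by simp [hg]⟩ := by
    fun_prop
  have hself : Measurable fun u : ({i} : Finset ι) → 𝓨 => u ⟨i, mem_singleton_self i⟩ := by fun_prop
  exact (hcoord.indepFun_finset {i}ᶜ {i} disjoint_compl_left measurable_pi_apply).comp
    hothers hself

lemma indepFun_fst_prodMk_snd {Z : Type*} [MeasurableSpace Z] {ρ : Measure Z}
    [IsProbabilityMeasure ρ] [IsProbabilityMeasure P] {X : Θ → 𝓧} {Y : Θ → 𝓨} (hX : Measurable X)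
    (hY : Measurable Y) (hXY : IndepFun X Y P) :
    IndepFun (fun ω : Z × Θ => (ω.1, X ω.2)) (fun ω => Y ω.2) (ρ.prod P) := by
  have : IsProbabilityMeasure (P.map X) := Measure.isProbabilityMeasure_map hX.aemeasurable
  have : IsProbabilityMeasure (P.map Y) := Measure.isProbabilityMeasure_map hY.aemeasurable
  have hlaw := (indepFun_iff_map_prod_eq_prod_map_map hX.aemeasurable hY.aemeasurable).1 hXY
  have hpres : MeasurePreserving (fun ω : Z × Θ => ((ω.1, X ω.2), Y ω.2)) (ρ.prod P)
      ((ρ.prod (P.map X)).prod (P.map Y)) :=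
    (measurePreserving_prodAssoc ρ (P.map X) (P.map Y)).symm.comp
      ((MeasurePreserving.id ρ).prod ⟨hX.prodMk hY, hlaw⟩)
  have hpast : (ρ.prod P).map (fun ω => (ω.1, X ω.2)) = ρ.prod (P.map X) :=
    (measurePreserving_fst.comp hpres).map_eq
  have hfresh : (ρ.prod P).map (fun ω => Y ω.2) = P.map Y :=
    (measurePreserving_snd.comp hpres).map_eq
  rw [indepFun_iff_map_prod_eq_prod_map_map (by fun_prop) (by fun_prop), hpast, hfresh]
  exact hpres.map_eq

lemma sum_integral_le_of_sum_lintegral_ofReal_le {κ : Type*} {s : Finset κ} {h : κ → Θ → ℝ} {C : ℝ}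
    (hh : ∀ k ∈ s, AEStronglyMeasurable (h k) P) (h_nonneg : ∀ k ∈ s, 0 ≤ h k) (hC : 0 ≤ C)
    (hle : ∑ k ∈ s, ∫⁻ θ, ENNReal.ofReal (h k θ) ∂P ≤ ENNReal.ofReal C) :
    ∑ k ∈ s, ∫ θ, h k θ ∂P ≤ C := by
  have hfin : ∀ k ∈ s, ∫⁻ θ, ENNReal.ofReal (h k θ) ∂P ≠ ∞ := fun k hk =>
    ne_top_of_le_ne_top ENNReal.ofReal_ne_top
      ((single_le_sum (f := fun k => ∫⁻ θ, ENNReal.ofReal (h k θ) ∂P) (fun _ _ => zero_le)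
        hk).trans hle)
  rw [sum_congr rfl fun k hk => integral_eq_lintegral_of_nonneg_ae (.of_forall (h_nonneg k hk))
    (hh k hk), ← ENNReal.toReal_sum hfin]
  exact ENNReal.toReal_le_of_le_ofReal hC hle

end Independence

section SquareIntegrable

variable {Ω E : Type*} [MeasurableSpace Ω] {μ : Measure Ω} [NormedAddCommGroup E]
  [InnerProductSpace ℝ E]

lemma integral_norm_add_sq_le {X Y : Ω → E} (hX : MemLp X 2 μ) (hY : MemLp Y 2 μ) :
    ∫ ω, ‖X ω + Y ω‖ ^ 2 ∂μ ≤ 2 * ∫ ω, ‖X ω‖ ^ 2 ∂μ + 2 * ∫ ω, ‖Y ω‖ ^ 2 ∂μ := by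
  have hX2 := (hX.integrable_norm_pow two_ne_zero).const_mul 2
  have hY2 := (hY.integrable_norm_pow two_ne_zero).const_mul 2
  rw [← integral_const_mul, ← integral_const_mul, ← integral_add hX2 hY2]
  refine integral_mono ((hX.add hY).integrable_norm_pow two_ne_zero) (hX2.add hY2) fun ω => ?_
  have := parallelogram_law_with_norm ℝ (X ω) (Y ω)
  dsimp only
  nlinarith [sq_nonneg ‖X ω - Y ω‖]

variable [CompleteSpace E]

lemma integral_norm_const_add_sq [IsProbabilityMeasure μ] {X : Ω → E} (hX : MemLp X 2 μ)
    (hX0 : ∫ ω, X ω ∂μ = 0) (a : E) :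
    ∫ ω, ‖a + X ω‖ ^ 2 ∂μ = ‖a‖ ^ 2 + ∫ ω, ‖X ω‖ ^ 2 ∂μ := by
  have hX1 : Integrable X μ := hX.integrable one_le_two
  have hinner : Integrable (fun ω => 2 * inner ℝ a (X ω)) μ := (hX1.const_inner a).const_mul 2
  have hlin : Integrable (fun ω => ‖a‖ ^ 2 + 2 * inner ℝ a (X ω)) μ :=
    (integrable_const _).add hinner
  simp_rw [norm_add_sq_real]
  rw [integral_add hlin (hX.integrable_norm_pow two_ne_zero),
    integral_add (integrable_const _) hinner, integral_const_mul, integral_inner hX1, hX0]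
  simp

lemma integral_norm_sub_integral_sq [IsProbabilityMeasure μ] {X : Ω → E} (hX : MemLp X 2 μ) :
    ∫ ω, ‖X ω - ∫ ω', X ω' ∂μ‖ ^ 2 ∂μ = ∫ ω, ‖X ω‖ ^ 2 ∂μ - ‖∫ ω, X ω ∂μ‖ ^ 2 := by
  have hX1 : Integrable X μ := hX.integrable one_le_two
  have h := integral_norm_const_add_sq (hX.sub (memLp_const (∫ ω, X ω ∂μ)))
    (by simp [integral_sub hX1 (integrable_const _)]) (∫ ω, X ω ∂μ)
  simp only [Pi.sub_apply, add_sub_cancel] at h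
  linarith

lemma integral_norm_sum_sq_of_pairwise_indepFun [IsFiniteMeasure μ] [MeasurableSpace E]
    [BorelSpace E] {ι : Type*} {s : Finset ι} {X : ι → Ω → E} (hX : ∀ i, MemLp (X i) 2 μ)
    (hX0 : ∀ i, ∫ ω, X i ω ∂μ = 0) (hindep : Pairwise fun i j => IndepFun (X i) (X j) μ) :
    ∫ ω, ‖∑ i ∈ s, X i ω‖ ^ 2 ∂μ = ∑ i ∈ s, ∫ ω, ‖X i ω‖ ^ 2 ∂μ := by
  have hX1 : ∀ i, Integrable (X i) μ := fun i => (hX i).integrable one_le_two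
  have horth : ∀ i j, i ≠ j → ∫ ω, inner ℝ (X i ω) (X j ω) ∂μ = 0 := fun i j hij => by
    exact ((hindep hij).integral_bilin (hX1 i) (hX1 j) (innerSL ℝ)).trans
      (by simp only [hX0, map_zero])
  have hint : ∀ i j, Integrable (fun ω => inner ℝ (X i ω) (X j ω)) μ := fun i j => by
    rcases eq_or_ne i j with rfl | hij
    · simpa using (hX i).integrable_norm_pow two_ne_zero
    · exact (hindep hij).integrable_bilin (hX1 i) (hX1 j) (innerSL ℝ)
  simp_rw [← real_inner_self_eq_norm_sq, sum_inner, inner_sum]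
  rw [integral_finsetSum _ fun i _ => integrable_finsetSum _ fun j _ => hint i j]
  refine sum_congr rfl fun i hi => ?_
  rw [integral_finsetSum _ fun j _ => hint i j]
  exact sum_eq_single_of_mem i hi fun j _ hij => horth i j hij.symm

end SquareIntegrable

section Descent

variable {E : Type*} [NormedAddCommGroup E] [InnerProductSpace ℝ E] [CompleteSpace E]

lemma le_add_inner_gradient_add_of_lipschitzWith {f : E → ℝ} (hf : Differentiable ℝ f) {L : ℝ≥0}
    (hL : LipschitzWith L (gradient f)) (x v : E) :
    f (x + v) ≤ f x + inner ℝ (gradient f x) v + L / 2 * ‖v‖ ^ 2 := by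
  have hline : ∀ t : ℝ, HasDerivAt (fun t : ℝ => f (x + t • v))
      (inner ℝ (gradient f (x + t • v)) v) t := fun t => by
    rw [inner_gradient_left]
    exact (hf _).hasFDerivAt.comp_hasDerivAt t
      (by simpa using ((hasDerivAt_id t).smul_const v).const_add x)
  have hquad : ∀ t : ℝ, HasDerivAt
      (fun t => f x + t * inner ℝ (gradient f x) v + L / 2 * t ^ 2 * ‖v‖ ^ 2)
      (inner ℝ (gradient f x) v + L * t * ‖v‖ ^ 2) t := fun t => by
    convert! (((hasDerivAt_id t).mul_const (inner ℝ (gradient f x) v)).const_add (f x)).add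
      (((hasDerivAt_pow 2 t).const_mul (L / 2 : ℝ)).mul_const (‖v‖ ^ 2)) using 1
    simp only [one_mul, Nat.cast_ofNat, Nat.add_one_sub_one, pow_one]; ring
  have hslope : ∀ t ∈ Set.Ico (0 : ℝ) 1, inner ℝ (gradient f (x + t • v)) v
      ≤ inner ℝ (gradient f x) v + L * t * ‖v‖ ^ 2 := fun t ht => by
    have h := hL.dist_le_mul (x + t • v) x
    rw [dist_eq_norm, dist_eq_norm, add_sub_cancel_left, norm_smul, Real.norm_of_nonneg ht.1] at h
    calc inner ℝ (gradient f (x + t • v)) v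
        = inner ℝ (gradient f x) v + inner ℝ (gradient f (x + t • v) - gradient f x) v := by
          rw [inner_sub_left]; ring
      _ ≤ inner ℝ (gradient f x) v + L * (t * ‖v‖) * ‖v‖ := by
          gcongr; exact (real_inner_le_norm _ _).trans (by gcongr)
      _ = _ := by ring
  simpa using image_le_of_deriv_right_le_deriv_boundary
    (fun t _ => (hline t).continuousAt.continuousWithinAt) (fun t _ => (hline t).hasDerivWithinAt)
    (by simp) (fun t _ => (hquad t).continuousAt.continuousWithinAt)
    (fun t _ => (hquad t).hasDerivWithinAt) hslope (Set.right_mem_Icc.2 zero_le_one)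

end Descent

section BatchMean

variable {ι E : Type*} [Fintype ι] [NormedAddCommGroup E] [InnerProductSpace ℝ E]

/-- The average `(1/B)∑ⱼ vⱼ` of a minibatch, whose size `B` is the cardinality of the index type. -/
noncomputable def batchMean (v : ι → E) : E := (Fintype.card ι : ℝ)⁻¹ • ∑ j, v j

lemma batchMean_sub (u v : ι → E) :
    batchMean (fun j => u j - v j) = batchMean u - batchMean v := by
  rw [batchMean, sum_sub_distrib, smul_sub, batchMean, batchMean]

lemma batchMean_const_smul (c : ℝ) (v : ι → E) :
    batchMean (fun j => c • v j) = c • batchMean v := by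
  rw [batchMean, ← smul_sum, smul_comm, batchMean]

lemma batchMean_const [Nonempty ι] (a : E) : batchMean (fun _ : ι => a) = a := by
  rw [batchMean, sum_const, card_univ, ← Nat.cast_smul_eq_nsmul ℝ,
    inv_smul_smul₀ (Nat.cast_ne_zero.2 Fintype.card_ne_zero)]

variable {Ω : Type*} [MeasurableSpace Ω] {μ : Measure Ω} [IsProbabilityMeasure μ] {U : Ω → E}

lemma memLp_batchMean_pi (hU : MemLp U 2 μ) :
    MemLp (fun ω : ι → Ω => batchMean fun j => U (ω j)) 2 (Measure.pi fun _ => μ) :=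
  (memLp_finsetSum _ fun j _ =>
    hU.comp_measurePreserving (measurePreserving_eval (fun _ => μ) j)).const_smul _

lemma integral_batchMean_pi [CompleteSpace E] [Nonempty ι] (hU : Integrable U μ) :
    ∫ ω : ι → Ω, batchMean (fun j => U (ω j)) ∂(Measure.pi fun _ => μ) = ∫ ξ, U ξ ∂μ := by
  simp_rw [batchMean]
  rw [integral_smul, integral_finsetSum _ fun j _ => integrable_comp_eval hU]
  simp_rw [integral_comp_eval (μ := fun _ => μ) hU.aestronglyMeasurable]
  exact batchMean_const _

lemma integral_norm_batchMean_sq_pi [CompleteSpace E] [MeasurableSpace E] [BorelSpace E]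
    (hU : MemLp U 2 μ) (hU0 : ∫ ξ, U ξ ∂μ = 0) :
    ∫ ω : ι → Ω, ‖batchMean fun j => U (ω j)‖ ^ 2 ∂(Measure.pi fun _ => μ)
      = (∫ ξ, ‖U ξ‖ ^ 2 ∂μ) / Fintype.card ι := by
  have hindep : iIndepFun (fun j (ω : ι → Ω) => U (ω j)) (Measure.pi fun _ => μ) :=
    iIndepFun_pi (X := fun _ => U) fun _ => hU.aestronglyMeasurable.aemeasurable
  have hsum := integral_norm_sum_sq_of_pairwise_indepFun (s := univ)
    (fun j => hU.comp_measurePreserving (measurePreserving_eval (fun _ : ι => μ) j))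
    (fun j => (integral_comp_eval (μ := fun _ => μ) hU.aestronglyMeasurable).trans hU0)
    fun i j hij => hindep.indepFun hij
  simp only [comp_apply, eval] at hsum
  simp_rw [batchMean, norm_smul, mul_pow]
  rw [integral_const_mul, hsum]
  simp_rw [integral_comp_eval (μ := fun _ => μ) (f := fun ξ => ‖U ξ‖ ^ 2)
    (hU.aestronglyMeasurable.norm.pow 2)]
  rw [sum_const, card_univ, nsmul_eq_mul, norm_inv, Real.norm_natCast]
  rcases eq_or_ne (Fintype.card ι : ℝ) 0 with h | h
  · simp [h]
  · field_simp

end BatchMean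

section StochasticGradient

variable {Ω E : Type*} [MeasurableSpace Ω] {μ : Measure Ω} [NormedAddCommGroup E]

/-- Mean-squared smoothness: `x ↦ G x ·` is `L`-Lipschitz from `E` to `L²(μ; E)`. -/
structure IsMeanSquaredSmooth (μ : Measure Ω) (G : E → Ω → E) (L : ℝ≥0) : Prop where
  memLp : ∀ x y, MemLp (fun ξ => G x ξ - G y ξ) 2 μ
  integral_sq_le : ∀ x y, ∫ ξ, ‖G x ξ - G y ξ‖ ^ 2 ∂μ ≤ L ^ 2 * ‖x - y‖ ^ 2

variable [InnerProductSpace ℝ E] [CompleteSpace E] {f : E → ℝ} {G : E → Ω → E} {σ p : ℝ} {L : ℝ≥0}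

/-- The stochastic gradients `G x ξ` of `f`, with `ξ` distributed according to `μ`, are unbiased. -/
structure IsUnbiasedGradient (μ : Measure Ω) (f : E → ℝ) (G : E → Ω → E) : Prop where
  integrable : ∀ x, Integrable (G x) μ
  integral_eq : ∀ x, ∫ ξ, G x ξ ∂μ = gradient f x

/-- The stochastic gradients `G x ξ` deviate from `∇f(x)` by at most `σ` in mean square. -/
structure HasBoundedVariance (μ : Measure Ω) (f : E → ℝ) (G : E → Ω → E) (σ : ℝ) : Prop where
  memLp : ∀ x, MemLp (fun ξ => G x ξ - gradient f x) 2 μ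
  integral_sq_le : ∀ x, ∫ ξ, ‖G x ξ - gradient f x‖ ^ 2 ∂μ ≤ σ ^ 2

lemma IsUnbiasedGradient.integral_sub (hG : IsUnbiasedGradient μ f G) (x y : E) :
    ∫ ξ, (G x ξ - G y ξ) ∂μ = gradient f x - gradient f y := by
  rw [MeasureTheory.integral_sub (hG.integrable x) (hG.integrable y), hG.integral_eq,
    hG.integral_eq]

/-- The fresh noise `(∇f(y; ξ) - ∇f(y)) - (1 - p)(∇f(x; ξ) - ∇f(x))` that a sample `ξ` adds to the
MVR gradient estimator when the iterate moves from `x` to `y`. -/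
noncomputable def mvrNoise (f : E → ℝ) (G : E → Ω → E) (p : ℝ) (x y : E) (ξ : Ω) : E :=
  (G y ξ - gradient f y) - (1 - p) • (G x ξ - gradient f x)

lemma HasBoundedVariance.memLp_mvrNoise (hσ : HasBoundedVariance μ f G σ) (x y : E) :
    MemLp (mvrNoise f G p x y) 2 μ :=
  (hσ.memLp y).sub ((hσ.memLp x).const_smul (1 - p))

variable [IsProbabilityMeasure μ]

lemma IsUnbiasedGradient.integral_norm_sub_sub_sq (hG : IsUnbiasedGradient μ f G)
    (hL : IsMeanSquaredSmooth μ G L) (x y : E) :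
    ∫ ξ, ‖G x ξ - G y ξ - (gradient f x - gradient f y)‖ ^ 2 ∂μ
      = ∫ ξ, ‖G x ξ - G y ξ‖ ^ 2 ∂μ - ‖gradient f x - gradient f y‖ ^ 2 := by
  simpa only [hG.integral_sub] using integral_norm_sub_integral_sq (hL.memLp x y)

lemma IsMeanSquaredSmooth.lipschitzWith_gradient (hL : IsMeanSquaredSmooth μ G L)
    (hG : IsUnbiasedGradient μ f G) : LipschitzWith L (gradient f) := by
  refine LipschitzWith.of_dist_le_mul fun x y => ?_
  rw [dist_eq_norm, dist_eq_norm]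
  refine le_of_sq_le_sq ?_ (by positivity)
  have hvar : 0 ≤ ∫ ξ, ‖G x ξ - G y ξ - (gradient f x - gradient f y)‖ ^ 2 ∂μ :=
    integral_nonneg fun _ => sq_nonneg _
  rw [hG.integral_norm_sub_sub_sq hL] at hvar
  rw [mul_pow]
  linarith [hL.integral_sq_le x y]

lemma IsUnbiasedGradient.integral_mvrNoise (hG : IsUnbiasedGradient μ f G) (x y : E) :
    ∫ ξ, mvrNoise f G p x y ξ ∂μ = 0 := by
  have hdev : ∀ x, ∫ ξ, (G x ξ - gradient f x) ∂μ = 0 := fun x => by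
    simp [MeasureTheory.integral_sub (hG.integrable x) (integrable_const _), hG.integral_eq]
  have hint : ∀ x, Integrable (fun ξ => G x ξ - gradient f x) μ := fun x =>
    (hG.integrable x).sub (integrable_const _)
  have hscaled : Integrable (fun ξ => (1 - p) • (G x ξ - gradient f x)) μ := (hint x).smul _
  simp_rw [mvrNoise]
  rw [MeasureTheory.integral_sub (hint y) hscaled, integral_smul, hdev, hdev,
    smul_zero, sub_zero]

lemma integral_norm_mvrNoise_sq_le (hG : IsUnbiasedGradient μ f G)
    (hσ : HasBoundedVariance μ f G σ) (hL : IsMeanSquaredSmooth μ G L) (x y : E) :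
    ∫ ξ, ‖mvrNoise f G p x y ξ‖ ^ 2 ∂μ
      ≤ 2 * p ^ 2 * σ ^ 2 + 2 * (1 - p) ^ 2 * L ^ 2 * ‖y - x‖ ^ 2 := by
  have hsplit : ∀ ξ, mvrNoise f G p x y ξ = p • (G y ξ - gradient f y)
      + (1 - p) • (G y ξ - G x ξ - (gradient f y - gradient f x)) := fun ξ => by
    rw [mvrNoise]; module
  have hcentered : ∫ ξ, ‖G y ξ - G x ξ - (gradient f y - gradient f x)‖ ^ 2 ∂μ
      ≤ L ^ 2 * ‖y - x‖ ^ 2 := by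
    rw [hG.integral_norm_sub_sub_sq hL]
    linarith [hL.integral_sq_le y x, sq_nonneg ‖gradient f y - gradient f x‖]
  calc ∫ ξ, ‖mvrNoise f G p x y ξ‖ ^ 2 ∂μ
      ≤ 2 * ∫ ξ, ‖p • (G y ξ - gradient f y)‖ ^ 2 ∂μ
        + 2 * ∫ ξ, ‖(1 - p) • (G y ξ - G x ξ - (gradient f y - gradient f x))‖ ^ 2 ∂μ := by
        simp_rw [hsplit]
        exact integral_norm_add_sq_le ((hσ.memLp y).const_smul p)
          (((hL.memLp y x).sub (memLp_const _)).const_smul (1 - p))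
    _ = 2 * p ^ 2 * ∫ ξ, ‖G y ξ - gradient f y‖ ^ 2 ∂μ + 2 * (1 - p) ^ 2
        * ∫ ξ, ‖G y ξ - G x ξ - (gradient f y - gradient f x)‖ ^ 2 ∂μ := by
        simp_rw [norm_smul, mul_pow, Real.norm_eq_abs, sq_abs, integral_const_mul]; ring
    _ ≤ 2 * p ^ 2 * σ ^ 2 + 2 * (1 - p) ^ 2 * (L ^ 2 * ‖y - x‖ ^ 2) := by
        gcongr; exact hσ.integral_sq_le y
    _ = _ := by ring

end StochasticGradient

section Estimator

variable {Ω E ι : Type*} [NormedAddCommGroup E] [InnerProductSpace ℝ E] [Fintype ι]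

/-- The MVR gradient estimator at `y`, computed from the estimator `g` at the previous iterate `x`
and a fresh minibatch `ξ`. -/
noncomputable def mvrEstimate (G : E → Ω → E) (p : ℝ) (x y g : E) (ξ : ι → Ω) : E :=
  batchMean (fun j => G y (ξ j)) + (1 - p) • (g - batchMean fun j => G x (ξ j))

variable [CompleteSpace E] {f : E → ℝ} {G : E → Ω → E} {σ p : ℝ} {L : ℝ≥0}

lemma batchMean_sub_gradient [Nonempty ι] (x : E) (ξ : ι → Ω) :
    batchMean (fun j => G x (ξ j)) - gradient f x
      = batchMean fun j => G x (ξ j) - gradient f x := by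
  rw [batchMean_sub, batchMean_const]

lemma mvrEstimate_sub_gradient [Nonempty ι] (x y g : E) (ξ : ι → Ω) :
    mvrEstimate G p x y g ξ - gradient f y
      = (1 - p) • (g - gradient f x) + batchMean fun j => mvrNoise f G p x y (ξ j) := by
  simp_rw [mvrNoise, batchMean_sub, batchMean_const_smul, batchMean_sub, batchMean_const]
  rw [mvrEstimate]
  module

variable [MeasurableSpace Ω] {μ : Measure Ω} [IsProbabilityMeasure μ]

lemma memLp_batchMean_sub_gradient [Nonempty ι] (hσ : HasBoundedVariance μ f G σ) (x : E) :
    MemLp (fun ξ : ι → Ω => batchMean (fun j => G x (ξ j)) - gradient f x) 2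
      (Measure.pi fun _ => μ) := by
  simp_rw [batchMean_sub_gradient]
  exact memLp_batchMean_pi (hσ.memLp x)

lemma memLp_mvrEstimate_sub_gradient [Nonempty ι] (hσ : HasBoundedVariance μ f G σ) (x y g : E) :
    MemLp (fun ξ : ι → Ω => mvrEstimate G p x y g ξ - gradient f y) 2 (Measure.pi fun _ => μ) := by
  simp_rw [mvrEstimate_sub_gradient x y g]
  exact (memLp_const ((1 - p) • (g - gradient f x))).add
    (memLp_batchMean_pi (hσ.memLp_mvrNoise x y))

variable [MeasurableSpace E] [BorelSpace E]

lemma integral_norm_batchMean_sub_gradient_sq_le [Nonempty ι] (hG : IsUnbiasedGradient μ f G)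
    (hσ : HasBoundedVariance μ f G σ) (x : E) :
    ∫ ξ : ι → Ω, ‖batchMean (fun j => G x (ξ j)) - gradient f x‖ ^ 2 ∂(Measure.pi fun _ => μ)
      ≤ σ ^ 2 / Fintype.card ι := by
  simp_rw [batchMean_sub_gradient]
  rw [integral_norm_batchMean_sq_pi (hσ.memLp x)
    (by simp [integral_sub (hG.integrable x) (integrable_const _), hG.integral_eq])]
  gcongr
  exact hσ.integral_sq_le x

lemma integral_norm_mvrEstimate_sub_gradient_sq_le [Nonempty ι] (hG : IsUnbiasedGradient μ f G)
    (hσ : HasBoundedVariance μ f G σ) (hL : IsMeanSquaredSmooth μ G L) (x y g : E) :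
    ∫ ξ : ι → Ω, ‖mvrEstimate G p x y g ξ - gradient f y‖ ^ 2 ∂(Measure.pi fun _ => μ)
      ≤ (1 - p) ^ 2 * ‖g - gradient f x‖ ^ 2
        + (2 * p ^ 2 * σ ^ 2 + 2 * (1 - p) ^ 2 * L ^ 2 * ‖y - x‖ ^ 2) / Fintype.card ι := by
  have hnoise := hσ.memLp_mvrNoise (p := p) x y
  have hnoise0 : ∫ ξ, mvrNoise f G p x y ξ ∂μ = 0 := hG.integral_mvrNoise x y
  simp_rw [mvrEstimate_sub_gradient x y g]
  rw [integral_norm_const_add_sq (memLp_batchMean_pi hnoise)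
    ((integral_batchMean_pi (hnoise.integrable one_le_two)).trans hnoise0),
    integral_norm_batchMean_sq_pi hnoise hnoise0, norm_smul, mul_pow, Real.norm_eq_abs, sq_abs]
  gcongr
  exact integral_norm_mvrNoise_sq_le hG hσ hL x y

end Estimator

section Drift

variable {Ω E ι ι₀ : Type*} [NormedAddCommGroup E] [InnerProductSpace ℝ E] [Fintype ι] [Fintype ι₀]

/-- One iteration of MVR on the state `(x, g)`, with stepsize `γ` and fresh minibatch `ξ`. -/
noncomputable def mvrStep (G : E → Ω → E) (γ p : ℝ) (s : E × E) (ξ : ι → Ω) : E × E :=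
  (s.1 - γ • s.2, mvrEstimate G p s.1 (s.1 - γ • s.2) s.2 ξ)

variable [CompleteSpace E] {f : E → ℝ} {fstar : ℝ} {G : E → Ω → E} {σ γ p : ℝ} {L : ℝ≥0}

/-- The potential `f(x) - f* + γ/(2p) ‖g - ∇f(x)‖²` of a state `(x, g)`. Its weight makes the
contraction of the estimation error absorb the error term of the descent inequality. -/
noncomputable def mvrLyapunov (f : E → ℝ) (fstar γ p : ℝ) (s : E × E) : ℝ :=
  f s.1 - fstar + γ / (2 * p) * ‖s.2 - gradient f s.1‖ ^ 2

lemma mvrLyapunov_nonneg (hfstar : ∀ x, fstar ≤ f x) (hγ : 0 ≤ γ) (hp : 0 ≤ p) (s : E × E) :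
    0 ≤ mvrLyapunov f fstar γ p s :=
  add_nonneg (sub_nonneg.2 (hfstar s.1)) (by positivity)

lemma le_sub_norm_gradient_sq_of_lipschitzWith (hf : Differentiable ℝ f)
    (hL : LipschitzWith L (gradient f)) (x g : E) :
    f (x - γ • g) ≤ f x - γ / 2 * ‖gradient f x‖ ^ 2 - γ / 2 * (1 - L * γ) * ‖g‖ ^ 2
      + γ / 2 * ‖g - gradient f x‖ ^ 2 := by
  have hquad := le_add_inner_gradient_add_of_lipschitzWith hf hL x (-(γ • g))
  have hpolar := norm_sub_sq_real g (gradient f x)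
  rw [← sub_eq_add_neg, inner_neg_right, inner_smul_right, norm_neg, norm_smul, mul_pow,
    Real.norm_eq_abs, sq_abs, real_inner_comm] at hquad
  linear_combination hquad - γ / 2 * hpolar

variable [MeasurableSpace Ω] {μ : Measure Ω} [IsProbabilityMeasure μ]

lemma integrable_mvrLyapunov_mvrStep [Nonempty ι] (hσ : HasBoundedVariance μ f G σ) (s : E × E) :
    Integrable (fun ξ : ι → Ω => mvrLyapunov f fstar γ p (mvrStep G γ p s ξ))
      (Measure.pi fun _ => μ) :=
  (integrable_const (f (s.1 - γ • s.2) - fstar)).add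
    (((memLp_mvrEstimate_sub_gradient hσ s.1 (s.1 - γ • s.2) s.2).integrable_norm_pow
      two_ne_zero).const_mul _)

variable [MeasurableSpace E] [BorelSpace E]

lemma integral_mvrLyapunov_mvrStep_le [Nonempty ι] (hG : IsUnbiasedGradient μ f G)
    (hσ : HasBoundedVariance μ f G σ) (hL : IsMeanSquaredSmooth μ G L) (hγ : 0 ≤ γ) (hp : 0 ≤ p)
    (s : E × E) :
    ∫ ξ : ι → Ω, mvrLyapunov f fstar γ p (mvrStep G γ p s ξ) ∂(Measure.pi fun _ => μ)
      ≤ f (s.1 - γ • s.2) - fstar + γ / (2 * p) * ((1 - p) ^ 2 * ‖s.2 - gradient f s.1‖ ^ 2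
        + (2 * p ^ 2 * σ ^ 2 + 2 * (1 - p) ^ 2 * (L * γ) ^ 2 * ‖s.2‖ ^ 2) / Fintype.card ι) := by
  have herror := integral_norm_mvrEstimate_sub_gradient_sq_le (ι := ι) (p := p) hG hσ hL s.1
    (s.1 - γ • s.2) s.2
  rw [sub_sub_cancel_left, norm_neg, norm_smul, mul_pow, Real.norm_eq_abs, sq_abs, ← mul_assoc,
    mul_assoc _ (_ ^ 2) (γ ^ 2), ← mul_pow (L : ℝ)] at herror
  simp only [mvrLyapunov, mvrStep]
  rw [integral_add (integrable_const _) (((memLp_mvrEstimate_sub_gradient hσ s.1 (s.1 - γ • s.2)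
    s.2).integrable_norm_pow two_ne_zero).const_mul _), integral_const, integral_const_mul,
    probReal_univ, one_smul]
  gcongr

theorem integral_mvrLyapunov_mvrStep_add_le [Nonempty ι] (hf : Differentiable ℝ f)
    (hG : IsUnbiasedGradient μ f G) (hσ : HasBoundedVariance μ f G σ)
    (hL : IsMeanSquaredSmooth μ G L) (hγ : 0 ≤ γ) (hp : 0 < p) (hp1 : p ≤ 1)
    (hstep : L * γ + 2 * (1 - p) ^ 2 * (L * γ) ^ 2 / (p * Fintype.card ι) ≤ 1) (s : E × E) :
    ∫ ξ : ι → Ω, mvrLyapunov f fstar γ p (mvrStep G γ p s ξ) ∂(Measure.pi fun _ => μ)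
        + γ / 2 * ‖gradient f s.1‖ ^ 2
      ≤ mvrLyapunov f fstar γ p s + γ * p * σ ^ 2 / Fintype.card ι := by
  have hn : (Fintype.card ι : ℝ) ≠ 0 := Nat.cast_ne_zero.2 Fintype.card_ne_zero
  have hdescent := le_sub_norm_gradient_sq_of_lipschitzWith (γ := γ) hf
    (hL.lipschitzWith_gradient hG) s.1 s.2
  have hexpect := integral_mvrLyapunov_mvrStep_le (ι := ι) (fstar := fstar) hG hσ hL hγ hp.le s
  have herror_coeff : γ / 2 + γ / (2 * p) * (1 - p) ^ 2 ≤ γ / (2 * p) := by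
    have : γ / (2 * p) - (γ / 2 + γ / (2 * p) * (1 - p) ^ 2) = γ / 2 * (1 - p) := by
      field_simp; ring
    linarith [mul_nonneg (by positivity : 0 ≤ γ / 2) (sub_nonneg.2 hp1)]
  have hmove_coeff : γ / 2 * (2 * (1 - p) ^ 2 * (L * γ) ^ 2 / (p * Fintype.card ι))
      ≤ γ / 2 * (1 - L * γ) := by
    gcongr; linarith
  calc _ ≤ f s.1 - fstar
        + (γ / 2 + γ / (2 * p) * (1 - p) ^ 2) * ‖s.2 - gradient f s.1‖ ^ 2
        + (γ / 2 * (2 * (1 - p) ^ 2 * (L * γ) ^ 2 / (p * Fintype.card ι))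
          - γ / 2 * (1 - L * γ)) * ‖s.2‖ ^ 2 + γ * p * σ ^ 2 / Fintype.card ι := by
        refine (add_le_add_left (hexpect.trans (add_le_add_left
          (sub_le_sub_right hdescent fstar) _)) _).trans_eq ?_
        field_simp; ring
    _ ≤ f s.1 - fstar + γ / (2 * p) * ‖s.2 - gradient f s.1‖ ^ 2 + 0 * ‖s.2‖ ^ 2
        + γ * p * σ ^ 2 / Fintype.card ι := by gcongr; linarith
    _ = _ := by rw [mvrLyapunov]; ring

lemma lintegral_mvrLyapunov_mvrStep_add_le [Nonempty ι] (hf : Differentiable ℝ f)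
    (hfstar : ∀ x, fstar ≤ f x) (hG : IsUnbiasedGradient μ f G) (hσ : HasBoundedVariance μ f G σ)
    (hL : IsMeanSquaredSmooth μ G L) (hγ : 0 ≤ γ) (hp : 0 < p) (hp1 : p ≤ 1)
    (hstep : L * γ + 2 * (1 - p) ^ 2 * (L * γ) ^ 2 / (p * Fintype.card ι) ≤ 1) (s : E × E) :
    ∫⁻ ξ : ι → Ω, ENNReal.ofReal (mvrLyapunov f fstar γ p (mvrStep G γ p s ξ))
          ∂(Measure.pi fun _ => μ)
        + ENNReal.ofReal (γ / 2 * ‖gradient f s.1‖ ^ 2)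
      ≤ ENNReal.ofReal (mvrLyapunov f fstar γ p s)
        + ENNReal.ofReal (γ * p * σ ^ 2 / Fintype.card ι) := by
  have hnonneg := mvrLyapunov_nonneg hfstar hγ hp.le
  rw [← ofReal_integral_eq_lintegral_ofReal (integrable_mvrLyapunov_mvrStep hσ s)
    (.of_forall fun _ => hnonneg _), ← ENNReal.ofReal_add (integral_nonneg fun _ => hnonneg _)
    (by positivity), ← ENNReal.ofReal_add (hnonneg s) (by positivity)]
  exact ENNReal.ofReal_le_ofReal (integral_mvrLyapunov_mvrStep_add_le hf hG hσ hL hγ hp hp1 hstep s)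

lemma lintegral_mvrLyapunov_batchMean_le [Nonempty ι₀] (hfstar : ∀ x, fstar ≤ f x)
    (hG : IsUnbiasedGradient μ f G) (hσ : HasBoundedVariance μ f G σ) (hγ : 0 ≤ γ) (hp : 0 ≤ p)
    (x : E) :
    ∫⁻ ζ : ι₀ → Ω, ENNReal.ofReal (mvrLyapunov f fstar γ p (x, batchMean fun j => G x (ζ j)))
        ∂(Measure.pi fun _ => μ)
      ≤ ENNReal.ofReal (f x - fstar + γ / (2 * p) * (σ ^ 2 / Fintype.card ι₀)) := by
  have herror : Integrable (fun ζ : ι₀ → Ω => γ / (2 * p)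
      * ‖batchMean (fun j => G x (ζ j)) - gradient f x‖ ^ 2) (Measure.pi fun _ => μ) :=
    ((memLp_batchMean_sub_gradient hσ x).integrable_norm_pow two_ne_zero).const_mul _
  have hint : Integrable (fun ζ : ι₀ → Ω =>
      mvrLyapunov f fstar γ p (x, batchMean fun j => G x (ζ j))) (Measure.pi fun _ => μ) :=
    (integrable_const (f x - fstar)).add herror
  rw [← ofReal_integral_eq_lintegral_ofReal hint
    (.of_forall fun _ => mvrLyapunov_nonneg hfstar hγ hp _)]
  refine ENNReal.ofReal_le_ofReal ?_
  simp only [mvrLyapunov]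
  rw [integral_add (integrable_const _) herror, integral_const, integral_const_mul,
    probReal_univ, one_smul]
  gcongr
  exact integral_norm_batchMean_sub_gradient_sq_le hG hσ x

end Drift

section Convergence

variable {Ω E Θ ι ι₀ : Type*} [NormedAddCommGroup E] [InnerProductSpace ℝ E] [Fintype ι]
  [Fintype ι₀]

/-- The states `(xᵏ, gᵏ)` of MVR started at `x0` with the minibatch `ζ`, fed with the minibatches
`ξ 0, ξ 1, …`. -/
noncomputable def mvrIterate (G : E → Ω → E) (γ p : ℝ) (x0 : E) (ζ : ι₀ → Ω) (ξ : ℕ → ι → Ω) :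
    ℕ → E × E
  | 0 => (x0, batchMean fun j => G x0 (ζ j))
  | k + 1 => mvrStep G γ p (mvrIterate G γ p x0 ζ ξ k) (ξ k)

variable [MeasurableSpace Ω] [MeasurableSpace Θ]

/-- Over `K` iterations, the initial minibatch `ζ` and the minibatches `ξ k` consist of independent
samples of `μ`, each `ξ k` being independent of its past `ζ, ξ 0, …, ξ (k - 1)`. -/
structure IsSampleStream (P : Measure Θ) (μ : Measure Ω) (K : ℕ)
    (ζ : Θ → ι₀ → Ω) (ξ : ℕ → Θ → ι → Ω) : Prop where
  measurePreserving_init : MeasurePreserving ζ P (Measure.pi fun _ => μ)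
  measurePreserving : ∀ k < K, MeasurePreserving (ξ k) P (Measure.pi fun _ => μ)
  indepFun_past : ∀ k < K, IndepFun (fun θ => (ζ θ, fun i : Fin k => ξ i θ)) (ξ k) P

variable [MeasurableSpace E] [BorelSpace E] [SecondCountableTopology E] {G : E → Ω → E}
  {x0 : E} {γ p : ℝ}

lemma measurable_batchMean_uncurry (hG : Measurable (uncurry G)) :
    Measurable fun q : E × (ι → Ω) => batchMean fun j => G q.1 (q.2 j) := by
  have hterm : ∀ j, Measurable fun q : E × (ι → Ω) => G q.1 (q.2 j) := fun j =>
    hG.comp (by fun_prop : Measurable fun q : E × (ι → Ω) => (q.1, q.2 j))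
  exact (univ.measurable_fun_sum fun j _ => hterm j).const_smul _

lemma measurable_mvrStep (hG : Measurable (uncurry G)) :
    Measurable (uncurry (mvrStep (ι := ι) G γ p)) := by
  have hmean {h : (E × E) × (ι → Ω) → E} (hh : Measurable h) :
      Measurable fun q => batchMean fun j => G (h q) (q.2 j) :=
    (measurable_batchMean_uncurry hG).comp (hh.prodMk measurable_snd)
  have hnext : Measurable fun q : (E × E) × (ι → Ω) => q.1.1 - γ • q.1.2 := by fun_prop
  exact hnext.prodMk ((hmean hnext).add
    ((measurable_fst.snd.sub (hmean measurable_fst.fst)).const_smul (1 - p)))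

lemma measurable_mvrIterate (hG : Measurable (uncurry G)) {ζ : Θ → ι₀ → Ω}
    {ξ : ℕ → Θ → ι → Ω} (hζ : Measurable ζ) {k : ℕ} (hξ : ∀ i < k, Measurable (ξ i)) :
    Measurable fun θ => mvrIterate G γ p x0 (ζ θ) (fun i => ξ i θ) k := by
  induction k with
  | zero =>
    exact measurable_const.prodMk
      ((measurable_batchMean_uncurry hG).comp (measurable_const.prodMk hζ))
  | succ k ih =>
    exact (measurable_mvrStep hG).comp
      ((ih fun i hi => hξ i (by omega)).prodMk (hξ k k.lt_succ_self))

variable {P : Measure Θ} {μ : Measure Ω} {K : ℕ} {ζ : Θ → ι₀ → Ω}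
  {ξ : ℕ → Θ → ι → Ω}

lemma IsSampleStream.measurable_mvrIterate (hζξ : IsSampleStream P μ K ζ ξ)
    (hG : Measurable (uncurry G)) {k : ℕ} (hk : k ≤ K) :
    Measurable fun θ => mvrIterate G γ p x0 (ζ θ) (fun i => ξ i θ) k :=
  _root_.measurable_mvrIterate hG hζξ.measurePreserving_init.measurable fun i hi =>
    (hζξ.measurePreserving i (by omega)).measurable

lemma IsSampleStream.indepFun_mvrIterate (hζξ : IsSampleStream P μ K ζ ξ)
    (hG : Measurable (uncurry G)) {k : ℕ} (hk : k < K) :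
    IndepFun (fun θ => mvrIterate G γ p x0 (ζ θ) (fun i => ξ i θ) k) (ξ k) P := by
  let past : Θ → (ι₀ → Ω) × (Fin k → ι → Ω) := fun θ => (ζ θ, fun i => ξ i θ)
  have hpast : Measurable[.comap past inferInstance] past := comap_measurable past
  have hstate : Measurable[.comap past inferInstance] fun θ =>
      mvrIterate G γ p x0 (ζ θ) (fun i => ξ i θ) k := by
    let _ : MeasurableSpace Θ := .comap past inferInstance
    exact _root_.measurable_mvrIterate hG (measurable_fst.comp hpast) fun i hi =>
      (measurable_pi_apply (⟨i, hi⟩ : Fin k)).comp (measurable_snd.comp hpast)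
  exact (IndepFun_iff_Indep _ _ _).2 (indep_of_indep_of_le_left
    ((IndepFun_iff_Indep _ _ _).1 (hζξ.indepFun_past k hk)) hstate.comap_le)

variable [CompleteSpace E] {f : E → ℝ} {fstar σ : ℝ} {L : ℝ≥0} [IsProbabilityMeasure μ]
  [IsProbabilityMeasure P]

theorem sum_integral_norm_gradient_mvrIterate_sq_le [Nonempty ι] [Nonempty ι₀]
    (hf : Differentiable ℝ f) (hfstar : ∀ x, fstar ≤ f x) (hGm : Measurable (uncurry G))
    (hG : IsUnbiasedGradient μ f G) (hσ : HasBoundedVariance μ f G σ)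
    (hL : IsMeanSquaredSmooth μ G L) (hγ : 0 ≤ γ) (hp : 0 < p) (hp1 : p ≤ 1)
    (hstep : L * γ + 2 * (1 - p) ^ 2 * (L * γ) ^ 2 / (p * Fintype.card ι) ≤ 1)
    (hζξ : IsSampleStream P μ K ζ ξ) :
    γ / 2 * ∑ k ∈ range K,
        ∫ θ, ‖gradient f (mvrIterate G γ p x0 (ζ θ) (fun i => ξ i θ) k).1‖ ^ 2 ∂P
      ≤ f x0 - fstar + γ / (2 * p) * (σ ^ 2 / Fintype.card ι₀)
        + K * (γ * p * σ ^ 2 / Fintype.card ι) := by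
  let S : ℕ → Θ → E × E := fun k θ => mvrIterate G γ p x0 (ζ θ) (fun i => ξ i θ) k
  have hgrad : Measurable (gradient f) := (hL.lipschitzWith_gradient hG).continuous.measurable
  have hSm : ∀ k < K, Measurable (S k) := fun k hk => hζξ.measurable_mvrIterate hGm hk.le
  have hV : Measurable fun s => ENNReal.ofReal (mvrLyapunov f fstar γ p s) := by
    have := hf.continuous.measurable
    unfold mvrLyapunov
    fun_prop
  have hI : Measurable fun s : E × E => ENNReal.ofReal (γ / 2 * ‖gradient f s.1‖ ^ 2) := by fun_prop
  have hdrift := lintegral_add_sum_lintegral_le_of_drift (P := P) (measurable_mvrStep hGm) hV hI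
    (lintegral_mvrLyapunov_mvrStep_add_le hf hfstar hG hσ hL hγ hp hp1 hstep) hSm
    (fun _ _ _ => rfl) hζξ.measurePreserving fun _ => hζξ.indepFun_mvrIterate hGm
  have hinit : ∫⁻ θ, ENNReal.ofReal (mvrLyapunov f fstar γ p (S 0 θ)) ∂P
      ≤ ENNReal.ofReal (f x0 - fstar + γ / (2 * p) * (σ ^ 2 / Fintype.card ι₀)) := by
    have hinit_m : Measurable fun ζ : ι₀ → Ω => ENNReal.ofReal
        (mvrLyapunov f fstar γ p (x0, batchMean fun j => G x0 (ζ j))) :=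
      hV.comp (measurable_const.prodMk ((measurable_batchMean_uncurry hGm).comp
        (measurable_const.prodMk measurable_id)))
    exact (hζξ.measurePreserving_init.lintegral_comp hinit_m).trans_le
      (lintegral_mvrLyapunov_batchMean_le hfstar hG hσ hγ hp.le x0)
  have hΔ : 0 ≤ f x0 - fstar := sub_nonneg.2 (hfstar x0)
  rw [mul_sum]
  simp_rw [← integral_const_mul]
  refine sum_integral_le_of_sum_lintegral_ofReal_le
    (fun k hk => ?_) (fun k _ θ => by positivity) (by positivity) ?_
  · exact ((hgrad.comp (hSm k (mem_range.1 hk)).fst).norm.pow_const 2).const_mul (γ / 2)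
      |>.aestronglyMeasurable
  · rw [ENNReal.ofReal_add (by positivity) (by positivity), ENNReal.ofReal_mul (by positivity),
      ENNReal.ofReal_natCast]
    exact (le_add_self.trans hdrift).trans (by gcongr)

end Convergence

section Tuning

variable {Ω E Θ ι ι₀ : Type*} [MeasurableSpace Ω] [MeasurableSpace Θ] [NormedAddCommGroup E]
  [InnerProductSpace ℝ E] [CompleteSpace E] [MeasurableSpace E] [BorelSpace E]
  [SecondCountableTopology E] [Fintype ι] [Fintype ι₀] {P : Measure Θ} [IsProbabilityMeasure P]
  {μ : Measure Ω} [IsProbabilityMeasure μ] {f : E → ℝ} {fstar σ ε : ℝ} {G : E → Ω → E} {x0 : E}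
  {L : ℝ≥0} {K : ℕ} {ζ : Θ → ι₀ → Ω} {ξ : ℕ → Θ → ι → Ω}

theorem sum_integral_norm_gradient_mvrIterate_sq_le_of_stepsize [Nonempty ι] [Nonempty ι₀] {p : ℝ}
    (hf : Differentiable ℝ f) (hfstar : ∀ x, fstar ≤ f x) (hGm : Measurable (uncurry G))
    (hG : IsUnbiasedGradient μ f G) (hσ : HasBoundedVariance μ f G σ) (hL_pos : 0 < L)
    (hL : IsMeanSquaredSmooth μ G L) (hp : 0 < p) (hp1 : p ≤ 1) (hpB : 1 ≤ p * Fintype.card ι)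
    (hζξ : IsSampleStream P μ K ζ ξ) :
    ∑ k ∈ range K,
        ∫ θ, ‖gradient f (mvrIterate G (1 / (4 * L)) p x0 (ζ θ) (fun i => ξ i θ) k).1‖ ^ 2 ∂P
      ≤ 8 * (f x0 - fstar) * L + 1 / p * (σ ^ 2 / Fintype.card ι₀)
        + K * (2 * (p * σ ^ 2 / Fintype.card ι)) := by
  have hLγ : (L : ℝ) * (1 / (4 * L)) = 1 / 4 := by field_simp
  have hstep : (L : ℝ) * (1 / (4 * L)) + 2 * (1 - p) ^ 2 * (L * (1 / (4 * L))) ^ 2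
      / (p * Fintype.card ι) ≤ 1 := by
    rw [hLγ, ← le_sub_iff_add_le', div_le_iff₀ (by positivity)]
    nlinarith
  have hbound := sum_integral_norm_gradient_mvrIterate_sq_le (x0 := x0) hf hfstar hGm hG hσ hL
    (by positivity) hp hp1 hstep hζξ
  rw [div_div, one_div_mul_eq_div, div_le_iff₀' (by positivity)] at hbound
  refine hbound.trans_eq ?_
  field_simp; ring

theorem rennalaMVR_epsilon_stationarity_general (hf : Differentiable ℝ f)
    (hfstar : ∀ x, fstar ≤ f x) (hGm : Measurable (uncurry G)) (hG : IsUnbiasedGradient μ f G)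
    (hσ_pos : 0 < σ) (hσ : HasBoundedVariance μ f G σ) (hL_pos : 0 < L)
    (hL : IsMeanSquaredSmooth μ G L) (hε : 0 < ε) (hεσ : ε ≤ σ ^ 2)
    (hB₀ : 6 * σ ^ 2 / ε ≤ Fintype.card ι₀) (hB : 6 * σ / √ε ≤ Fintype.card ι)
    (hζξ : IsSampleStream P μ K ζ ξ) (hK : 24 * (f x0 - fstar) * L / ε + σ / √ε ≤ K) :
    (1 / K : ℝ) * ∑ k ∈ range K, ∫ θ, ‖gradient f
        (mvrIterate G (1 / (4 * L)) (√ε / σ) x0 (ζ θ) (fun i => ξ i θ) k).1‖ ^ 2 ∂P ≤ ε := by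
  have hn₀ : 0 < Fintype.card ι₀ := Nat.cast_pos.1 (lt_of_lt_of_le (by positivity) hB₀)
  have hn : 0 < Fintype.card ι := Nat.cast_pos.1 (lt_of_lt_of_le (by positivity) hB)
  have : Nonempty ι₀ := Fintype.card_pos_iff.1 hn₀
  have : Nonempty ι := Fintype.card_pos_iff.1 hn
  have hK_pos : 0 < (K : ℝ) := lt_of_lt_of_le (add_pos_of_nonneg_of_pos (div_nonneg (mul_nonneg
    (mul_nonneg (by norm_num) (sub_nonneg.2 (hfstar x0))) L.2) hε.le) (by positivity)) hK
  have hp1 : √ε / σ ≤ 1 := (div_le_one hσ_pos).2 (Real.sqrt_le_iff.2 ⟨hσ_pos.le, hεσ⟩)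
  have hpB : 6 ≤ √ε / σ * Fintype.card ι :=
    calc (6 : ℝ) = √ε / σ * (6 * σ / √ε) := by field_simp
      _ ≤ _ := by gcongr
  have hinit : σ ^ 2 / Fintype.card ι₀ ≤ ε / 6 := by
    rw [div_le_iff₀ hε] at hB₀
    rw [div_le_iff₀ (by positivity)]
    linarith
  have hnoise : √ε / σ * σ ^ 2 / Fintype.card ι ≤ ε / 6 :=
    calc √ε / σ * σ ^ 2 / Fintype.card ι = √ε ^ 2 / (√ε / σ * Fintype.card ι) := by field_simp
      _ ≤ ε / 6 := by rw [Real.sq_sqrt hε.le]; gcongr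
  rw [one_div_mul_eq_div, div_le_iff₀ hK_pos]
  calc _ ≤ 8 * (f x0 - fstar) * L + 1 / (√ε / σ) * (σ ^ 2 / Fintype.card ι₀)
        + K * (2 * (√ε / σ * σ ^ 2 / Fintype.card ι)) :=
        sum_integral_norm_gradient_mvrIterate_sq_le_of_stepsize hf hfstar hGm hG hσ hL_pos hL
          (by positivity) hp1 (by linarith) hζξ
    _ ≤ 8 * (f x0 - fstar) * L + 1 / (√ε / σ) * (ε / 6) + K * (2 * (ε / 6)) := by gcongr
    _ = (24 * (f x0 - fstar) * L / ε + σ / √ε) * (ε / 3) - σ / √ε * (ε / 6) + K * (ε / 3) := by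
        field_simp; ring
    _ ≤ K * (ε / 3) - 0 + K * (ε / 3) := by gcongr; positivity
    _ ≤ ε * K := by linarith [mul_pos hε hK_pos]

end Tuning

lemma rennalaMVR_eq_mvrIterate {d : ℕ} {Ω : Type*}
    (G : EuclideanSpace ℝ (Fin d) → Ω → EuclideanSpace ℝ (Fin d)) (γ p : ℝ) {B₀ B : ℕ}
    (x0 : EuclideanSpace ℝ (Fin d)) (ζ : Fin B₀ → Ω) (ξ : ℕ → Fin B → Ω) (k : ℕ) :
    rennalaMVR G γ p B₀ B x0 ζ ξ k = mvrIterate G γ p x0 ζ ξ k := by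
  induction k with
  | zero => simp only [rennalaMVR, mvrIterate, batchMean, Fintype.card_fin]
  | succ k ih =>
    simp only [rennalaMVR, ih, mvrIterate, mvrStep, mvrEstimate, batchMean, Fintype.card_fin]

lemma isSampleStream_prod_pi {Ω ι ι₀ : Type*} [MeasurableSpace Ω] [Fintype ι] [Fintype ι₀]
    (μ : Measure Ω) [IsProbabilityMeasure μ] {K : ℕ} (hK : 1 ≤ K) :
    IsSampleStream ((Measure.pi fun _ : ι₀ => μ).prod
        (Measure.pi fun _ : Fin K => Measure.pi fun _ : ι => μ)) μ K
      Prod.fst (fun k ω => ω.2 ⟨k % K, Nat.mod_lt _ hK⟩) where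
  measurePreserving_init := measurePreserving_fst
  measurePreserving k _ := (measurePreserving_eval _ _).comp measurePreserving_snd
  indepFun_past k hk := by
    have hne (i : Fin k) : (⟨i % K, Nat.mod_lt _ hK⟩ : Fin K) ≠ ⟨k % K, Nat.mod_lt _ hK⟩ := by
      rw [Ne, Fin.mk.injEq, Nat.mod_eq_of_lt (i.2.trans hk), Nat.mod_eq_of_lt hk]
      exact i.2.ne
    have hpast : Measurable fun (η : Fin K → ι → Ω) (i : Fin k) => η ⟨i % K, Nat.mod_lt _ hK⟩ := by
      fun_prop
    exact indepFun_fst_prodMk_snd hpast (measurable_pi_apply _) (indepFun_eval_comp_pi hne)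

/-- With the tuned parameters `γ = 1/(4L̄)`, `p = √ε/σ`,
`B₀ = ⌈6σ²/ε⌉`, `B = ⌈6σ/√ε⌉` and `ε < σ²`, `ε < 2L̄Δ`, Rennala MVR satisfies
`(1/K)∑_{k<K} E‖∇f(xᵏ)‖² ≤ ε` for every `K ≥ 24ΔL̄/ε + σ/√ε`. -/
theorem rennalaMVR_epsilon_stationarity
    (d : ℕ) (hd : 1 ≤ d) {Ω : Type*} [MeasurableSpace Ω]
    (μ : Measure Ω) [IsProbabilityMeasure μ]
    (f : EuclideanSpace ℝ (Fin d) → ℝ) (hf : Differentiable ℝ f)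
    (fstar : ℝ) (hfstar : ∀ x, fstar ≤ f x)
    (G : EuclideanSpace ℝ (Fin d) → Ω → EuclideanSpace ℝ (Fin d))
    (hGmeas : Measurable fun q : (EuclideanSpace ℝ (Fin d)) × Ω => G q.1 q.2)
    (hGint : ∀ x, Integrable (G x) μ)
    (hUnbiased : ∀ x, (∫ ξ, G x ξ ∂μ) = gradient f x)
    (σ : ℝ) (hσ : 0 < σ)
    (hVarInt : ∀ x, Integrable (fun ξ => ‖G x ξ - gradient f x‖ ^ 2) μ)
    (hVar : ∀ x, (∫ ξ, ‖G x ξ - gradient f x‖ ^ 2 ∂μ) ≤ σ ^ 2)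
    (Lbar : ℝ) (hLbar : 0 < Lbar)
    (hMSint : ∀ x y, Integrable (fun ξ => ‖G x ξ - G y ξ‖ ^ 2) μ)
    (hMS : ∀ x y, (∫ ξ, ‖G x ξ - G y ξ‖ ^ 2 ∂μ) ≤ Lbar ^ 2 * ‖x - y‖ ^ 2)
    (x0 : EuclideanSpace ℝ (Fin d))
    (ε : ℝ) (hε : 0 < ε) (hεσ : ε < σ ^ 2)
    (hεΔ : ε < 2 * Lbar * (f x0 - fstar)) :
    ∀ (K : ℕ) (hK : 1 ≤ K),
      24 * (f x0 - fstar) * Lbar / ε + σ / Real.sqrt ε ≤ (K : ℝ) →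
      (1 / K : ℝ) * ∑ k ∈ Finset.range K,
          ∫ ω : (Fin ⌈6 * σ ^ 2 / ε⌉₊ → Ω) × (Fin K → Fin ⌈6 * σ / Real.sqrt ε⌉₊ → Ω),
            ‖gradient f ((rennalaMVR G (1 / (4 * Lbar)) (Real.sqrt ε / σ)
                ⌈6 * σ ^ 2 / ε⌉₊ ⌈6 * σ / Real.sqrt ε⌉₊ x0 ω.1
                (fun k' => ω.2 ⟨k' % K, Nat.mod_lt _ hK⟩) k).1)‖ ^ 2
            ∂((Measure.pi fun _ => μ).prod
                (Measure.pi fun _ => Measure.pi fun _ => μ))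
        ≤ ε := by
  intro K hK hKb
  lift Lbar to ℝ≥0 using hLbar.le
  have hG : IsUnbiasedGradient μ f G := ⟨hGint, hUnbiased⟩
  have hvar : HasBoundedVariance μ f G σ := ⟨fun x => (memLp_two_iff_integrable_sq_norm
    ((hGint x).sub (integrable_const _)).aestronglyMeasurable).2 (hVarInt x), hVar⟩
  have hsmooth : IsMeanSquaredSmooth μ G Lbar := ⟨fun x y => (memLp_two_iff_integrable_sq_norm
    ((hGint x).sub (hGint y)).aestronglyMeasurable).2 (hMSint x y), hMS⟩
  simp_rw [rennalaMVR_eq_mvrIterate]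
  exact rennalaMVR_epsilon_stationarity_general hf hfstar hGmeas hG hσ hvar hLbar hsmooth hε hεσ.le
    (by simpa using Nat.le_ceil _) (by simpa using Nat.le_ceil _) (isSampleStream_prod_pi μ hK) hKb
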